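/- arXiv:2406.06214 — 2 statements merged into one kernel-verified Lean document; each statement's English description precedes it below -/
import Mathlib

section
/- There exists a unique representation basis A of the integers such that A(-x,x)/log x tends to infinity as x → ∞. -/
open Filter Set

/-- `repCount A n` is the number of representations of `n` as `a + a'` with
`a ≤ a'` and `a, a' ∈ A`. -/
noncomputable def repCount (A : Set ℤ) (n : ℤ) : ℕ :=
  {p : ℤ × ℤ | p.1 ∈ A ∧ p.2 ∈ A ∧ p.1 ≤ p.2 ∧ p.1 + p.2 = n}.ncard

/-- `A` is a unique representation basis of `ℤ` if `r_A(n) = 1` for all `n`. -/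
def IsUniqueRepBasis (A : Set ℤ) : Prop := ∀ n : ℤ, repCount A n = 1

/-- `countIn A y x` is the number of elements of `A` in the real interval `[y, x]`. -/
noncomputable def countIn (A : Set ℤ) (y x : ℝ) : ℕ :=
  {a : ℤ | a ∈ A ∧ y ≤ (a : ℝ) ∧ (a : ℝ) ≤ x}.ncard

/-- Sidon property. -/
def SidonP (S : Set ℤ) : Prop :=
  ∀ a ∈ S, ∀ b ∈ S, ∀ c ∈ S, ∀ d ∈ S, a + b = c + d → (a = c ∧ b = d) ∨ (a = d ∧ b = c)

lemma exists_good (S : Finset ℤ) (n : ℤ) (m : ℕ) (hm : S.card ≤ m) :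
    ∃ b : ℤ, 0 ≤ b ∧ b ≤ 10 * (m : ℤ) ^ 3 ∧ ∀ x ∈ S, ∀ y ∈ S, ∀ z ∈ S,
      b ≠ x ∧ 2 * b ≠ x + y ∧ 2 * b ≠ n ∧ 3 * b ≠ n + x ∧ b ≠ x + y - z ∧ b ≠ n - x ∧
      2 * b ≠ n + x - y ∧ 3 * b ≠ 2 * n - x ∧ b ≠ n + x - y - z ∧ 2 * b ≠ 2 * n - x - y := by
  classical
  let F : ℤ × ℤ × ℤ → Finset ℤ := fun p =>
    ([p.1, (p.1 + p.2.1) / 2, n / 2, (n + p.1) / 3, p.1 + p.2.1 - p.2.2, n - p.1,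
      (n + p.1 - p.2.1) / 2, (2 * n - p.1) / 3, n + p.1 - p.2.1 - p.2.2,
      (2 * n - p.1 - p.2.1) / 2] : List ℤ).toFinset
  let B := (S ×ˢ S ×ˢ S).biUnion F
  have hB : B.card ≤ 10 * m ^ 3 := by
    calc B.card ≤ (S ×ˢ S ×ˢ S).card * 10 := by
          apply Finset.card_biUnion_le_card_mul
          intro p _
          exact List.toFinset_card_le _
      _ = 10 * S.card ^ 3 := by simp only [Finset.card_product]; ring
      _ ≤ 10 * m ^ 3 := by gcongr
  have hlt : B.card < (Finset.Icc (0 : ℤ) (10 * (m : ℤ) ^ 3)).card := by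
    rw [Int.card_Icc]
    have : (10 * (m : ℤ) ^ 3 + 1 - 0).toNat = 10 * m ^ 3 + 1 := by
      have : (10 * (m : ℤ) ^ 3 + 1 - 0) = ((10 * m ^ 3 + 1 : ℕ) : ℤ) := by push_cast; ring
      rw [this, Int.toNat_natCast]
    omega
  obtain ⟨b, hb, hbB⟩ := Finset.exists_mem_notMem_of_card_lt_card hlt
  rw [Finset.mem_Icc] at hb
  refine ⟨b, hb.1, hb.2, fun x hx y hy z hz => ?_⟩
  have h : b ∉ F (x, y, z) := fun h => hbB (Finset.mem_biUnion.2 ⟨(x, y, z), by simp [*], h⟩)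
  simp only [F, List.mem_toFinset, List.mem_cons, List.not_mem_nil, or_false, not_or] at h
  omega

set_option maxHeartbeats 4000000 in
lemma sidon_insert (S : Finset ℤ) (hS : SidonP S) (n b : ℤ)
    (hn : ∀ x ∈ S, ∀ y ∈ S, x + y ≠ n)
    (hb : ∀ x ∈ S, ∀ y ∈ S, ∀ z ∈ S,
      b ≠ x ∧ 2 * b ≠ x + y ∧ 2 * b ≠ n ∧ 3 * b ≠ n + x ∧ b ≠ x + y - z ∧ b ≠ n - x ∧
      2 * b ≠ n + x - y ∧ 3 * b ≠ 2 * n - x ∧ b ≠ n + x - y - z ∧ 2 * b ≠ 2 * n - x - y)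
    (hne : S.Nonempty) :
    SidonP ((insert b (insert (n - b) S) : Finset ℤ) : Set ℤ) := by
  obtain ⟨s, hs⟩ := hne
  have h0 := hb s hs s hs s hs
  have h1 : ∀ x ∈ S, _ := fun x hx => hb x hx x hx x hx
  have h2 : ∀ x ∈ S, ∀ y ∈ S, _ := fun x hx y hy => hb x hx y hy y hy
  intro a ha c hc d hd e he h
  simp only [Finset.coe_insert, Set.mem_insert_iff, Finset.mem_coe] at ha hc hd he
  rcases ha with ha | ha | ha <;> rcases hc with hc | hc | hc <;>
    rcases hd with hd | hd | hd <;> rcases he with he | he | he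
  all_goals first
    | omega
    | exact hS _ ha _ hc _ hd _ he h
    | (have q1 := h1 _ ‹a ∈ S›; omega)
    | (have q1 := h1 _ ‹c ∈ S›; omega)
    | (have q1 := h1 _ ‹d ∈ S›; omega)
    | (have q1 := h1 _ ‹e ∈ S›; omega)
    | (have q1 := h2 _ ‹a ∈ S› _ ‹c ∈ S›; have q2 := hn _ ‹a ∈ S› _ ‹c ∈ S›; omega)
    | (have q1 := h2 _ ‹d ∈ S› _ ‹e ∈ S›; have q2 := hn _ ‹d ∈ S› _ ‹e ∈ S›; omega)
    | (have q1 := h2 _ ‹a ∈ S› _ ‹d ∈ S›; have q2 := h2 _ ‹d ∈ S› _ ‹a ∈ S›; omega)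
    | (have q1 := h2 _ ‹a ∈ S› _ ‹e ∈ S›; have q2 := h2 _ ‹e ∈ S› _ ‹a ∈ S›; omega)
    | (have q1 := h2 _ ‹c ∈ S› _ ‹d ∈ S›; have q2 := h2 _ ‹d ∈ S› _ ‹c ∈ S›; omega)
    | (have q1 := h2 _ ‹c ∈ S› _ ‹e ∈ S›; have q2 := h2 _ ‹e ∈ S› _ ‹c ∈ S›; omega)
    | (have q1 := hb _ ha _ hc _ hd; have q2 := hb _ hd _ ha _ hc; omega)
    | (have q1 := hb _ ha _ hc _ he; have q2 := hb _ he _ ha _ hc; omega)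
    | (have q1 := hb _ hd _ he _ ha; have q2 := hb _ ha _ hd _ he; omega)
    | (have q1 := hb _ hd _ he _ hc; have q2 := hb _ hc _ hd _ he; omega)

/-- Enumeration of the integers. -/
def enumZ (k : ℕ) : ℤ := if k % 2 = 0 then (k / 2 : ℕ) else -((k / 2 : ℕ) : ℤ) - 1

lemma enumZ_inj {i j : ℕ} (h : enumZ i = enumZ j) : i = j := by
  unfold enumZ at h
  split_ifs at h <;> omega

lemma enumZ_surj (n : ℤ) : ∃ k, enumZ k = n := by
  rcases le_or_gt 0 n with h | h
  · refine ⟨2 * n.toNat, ?_⟩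
    unfold enumZ
    split_ifs <;> omega
  · refine ⟨2 * (-n - 1).toNat + 1, ?_⟩
    unfold enumZ
    split_ifs <;> omega

lemma enumZ_abs (k : ℕ) : |enumZ k| ≤ k + 1 := by
  rw [abs_le]; unfold enumZ
  split_ifs <;> omega

/-- Invariant of the construction at stage `k`. -/
def Stage (k : ℕ) (S : Finset ℤ) : Prop :=
  SidonP (S : Set ℤ) ∧ S.Nonempty ∧ S.card ≤ 2 * k + 1 ∧
    ∀ a ∈ S, |a| ≤ 11 * (2 * (k : ℤ) + 1) ^ 3

lemma stage_step (k : ℕ) (S : Finset ℤ) (h : Stage k S) :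
    ∃ T : Finset ℤ, Stage (k + 1) T ∧ S ⊆ T ∧ ∃ x ∈ T, ∃ y ∈ T, x + y = enumZ k := by
  classical
  obtain ⟨hS, hne, hc, hbd⟩ := h
  have hmono : 11 * (2 * (k : ℤ) + 1) ^ 3 ≤ 11 * (2 * ((k + 1 : ℕ) : ℤ) + 1) ^ 3 := by
    push_cast; gcongr; omega
  by_cases hn : ∃ x ∈ S, ∃ y ∈ S, x + y = enumZ k
  · exact ⟨S, ⟨hS, hne, by omega, fun a ha => (hbd a ha).trans hmono⟩, subset_rfl, hn⟩
  · push Not at hn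
    obtain ⟨b, hb0, hb1, hb⟩ := exists_good S (enumZ k) (2 * k + 1) hc
    refine ⟨insert b (insert (enumZ k - b) S),
      ⟨sidon_insert S hS _ b hn hb hne, by simp, ?_, ?_⟩, ?_, ?_⟩
    · have h1 := Finset.card_insert_le b (insert (enumZ k - b) S)
      have h2 := Finset.card_insert_le (enumZ k - b) S
      omega
    · push_cast at hb1
      have hk : (k : ℤ) + 1 ≤ (2 * ((k + 1 : ℕ) : ℤ) + 1) ^ 3 := by
        push_cast
        have : (0 : ℤ) ≤ k := by positivity
        nlinarith [pow_nonneg this 2, pow_nonneg this 3]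
      have he := abs_le.1 (enumZ_abs k)
      intro a ha
      simp only [Finset.mem_insert] at ha
      rcases ha with rfl | rfl | ha
      · rw [abs_le]; constructor <;> omega
      · rw [abs_le]; constructor <;> omega
      · exact (hbd a ha).trans hmono
    · intro x hx; simp [hx]
    · exact ⟨b, by simp, enumZ k - b, by simp, by ring⟩

lemma exists_seq : ∃ S : ℕ → Finset ℤ, (∀ k, Stage k (S k)) ∧ (∀ k, S k ⊆ S (k + 1)) ∧
    ∀ k, ∃ x ∈ S (k + 1), ∃ y ∈ S (k + 1), x + y = enumZ k := by
  choose f hf using stage_step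
  have h0 : Stage 0 {0} := by
    refine ⟨?_, by simp, by simp, by simp⟩
    intro a ha b hb c hc d hd _
    simp at ha hb hc hd
    omega
  let g : (k : ℕ) → {S : Finset ℤ // Stage k S} := fun k =>
    Nat.rec ⟨{0}, h0⟩ (fun k p => ⟨f k p.1 p.2, (hf k p.1 p.2).1⟩) k
  exact ⟨fun k => (g k).1, fun k => (g k).2, fun k => (hf k (g k).1 (g k).2).2.1,
    fun k => (hf k (g k).1 (g k).2).2.2⟩

/-- There exists a unique representation basis `A` such that `A(-x,x)/log x → ∞`. -/
theorem exists_urb_div_log_tendsto_atTop :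
    ∃ A : Set ℤ, IsUniqueRepBasis A ∧
      Tendsto (fun x : ℝ => (countIn A (-x) x : ℝ) / Real.log x) atTop atTop := by
  classical
  obtain ⟨S, hS, hstep, hrep⟩ := exists_seq
  have hmono : Monotone S := monotone_nat_of_le_succ hstep
  refine ⟨{a | ∃ k, a ∈ S k}, ?_, ?_⟩
  · have hsid : SidonP {a | ∃ k, a ∈ S k} := by
      rintro a ⟨i, hi⟩ b ⟨j, hj⟩ c ⟨k, hk⟩ d ⟨l, hl⟩ h
      refine (hS (i + j + k + l)).1 a ?_ b ?_ c ?_ d ?_ h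
      · exact hmono (by omega) hi
      · exact hmono (by omega) hj
      · exact hmono (by omega) hk
      · exact hmono (by omega) hl
    intro n
    obtain ⟨k, rfl⟩ := enumZ_surj n
    have : ∃ x ∈ {a | ∃ k, a ∈ S k}, ∃ y ∈ {a | ∃ k, a ∈ S k}, x ≤ y ∧ x + y = enumZ k := by
      obtain ⟨x, hx, y, hy, h⟩ := hrep k
      rcases le_total x y with hxy | hxy
      · exact ⟨x, ⟨_, hx⟩, y, ⟨_, hy⟩, hxy, h⟩
      · exact ⟨y, ⟨_, hy⟩, x, ⟨_, hx⟩, hxy, by omega⟩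
    obtain ⟨x, hx, y, hy, hxy, h⟩ := this
    unfold repCount
    rw [Set.ncard_eq_one]
    refine ⟨(x, y), Set.eq_singleton_iff_unique_mem.2 ⟨⟨hx, hy, hxy, h⟩, ?_⟩⟩
    rintro ⟨u, v⟩ ⟨hu, hv, huv, h'⟩
    simp only at hu hv huv h'
    have := hsid u hu v hv x hx y hy (by omega)
    ext <;> simp only <;> omega
  · have hcard : ∀ k, k ≤ (S k).card ^ 2 := by
      intro k
      have hsub : (Finset.range k).image enumZ ⊆ (S k ×ˢ S k).image (fun p => p.1 + p.2) := by
        intro n hn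
        obtain ⟨i, hi, rfl⟩ := Finset.mem_image.1 hn
        obtain ⟨x, hx, y, hy, h⟩ := hrep i
        have hik : i + 1 ≤ k := Finset.mem_range.1 hi
        exact Finset.mem_image.2 ⟨(x, y), Finset.mem_product.2 ⟨hmono hik hx, hmono hik hy⟩, h⟩
      calc k = ((Finset.range k).image enumZ).card := by
            rw [Finset.card_image_of_injective _ (fun i j h => enumZ_inj h), Finset.card_range]
        _ ≤ _ := Finset.card_le_card hsub
        _ ≤ _ := Finset.card_image_le
        _ = _ := by rw [Finset.card_product]; ring
    have hcount : ∀ (k : ℕ) (x : ℝ), 11 * (2 * (k : ℝ) + 1) ^ 3 ≤ x →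
        (S k).card ≤ countIn {a | ∃ k, a ∈ S k} (-x) x := by
      intro k x hx
      unfold countIn
      rw [← Set.ncard_coe_finset]
      apply Set.ncard_le_ncard
      · intro a ha
        have h1 := (hS k).2.2.2 a ha
        have h2 : |(a : ℝ)| ≤ 11 * (2 * (k : ℝ) + 1) ^ 3 := by exact_mod_cast h1
        have h3 := abs_le.1 (h2.trans hx)
        exact ⟨⟨k, ha⟩, h3.1, h3.2⟩
      · apply (Set.finite_Icc (⌈-x⌉) (⌊x⌋)).subset
        rintro a ⟨_, h1, h2⟩
        exact ⟨Int.ceil_le.2 h1, Int.le_floor.2 h2⟩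
    have hlim : Tendsto (fun x : ℝ => (x ^ (1 / 12 : ℝ) / 2) / Real.log x) atTop atTop := by
      have h1 := (isLittleO_log_rpow_atTop (r := 1 / 12) (by norm_num)).tendsto_div_nhds_zero
      have h2 : Tendsto (fun x : ℝ => Real.log x / x ^ (1 / 12 : ℝ)) atTop (nhdsWithin 0 (Ioi 0)) := by
        refine tendsto_nhdsWithin_iff.2 ⟨h1, ?_⟩
        filter_upwards [eventually_gt_atTop 1] with x hx
        exact div_pos (Real.log_pos hx) (by positivity)
      have h3 := (h2.inv_tendsto_nhdsGT_zero).atTop_div_const (r := 2) (by norm_num)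
      refine h3.congr fun x => ?_
      simp only [Pi.inv_apply, inv_div]
      ring
    refine tendsto_atTop_mono' _ ?_ hlim
    filter_upwards [eventually_ge_atTop ((297 : ℝ) ^ 2)] with x hx
    have hx0 : (1 : ℝ) ≤ x := le_trans (by norm_num) hx
    have hlog : 0 ≤ Real.log x := Real.log_nonneg hx0
    refine div_le_div_of_nonneg_right ?_ hlog
    set t : ℝ := x ^ (1 / 12 : ℝ) with ht
    have ht1 : 1 ≤ t := Real.one_le_rpow hx0 (by norm_num)
    have ht12 : t ^ 12 = x := by
      rw [ht, ← Real.rpow_natCast, ← Real.rpow_mul (by linarith)]; norm_num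
    set k := ⌊t ^ 2⌋₊ with hk
    have hk1 : (k : ℝ) ≤ t ^ 2 := Nat.floor_le (by positivity)
    have hk2 : t ^ 2 < k + 1 := Nat.lt_floor_add_one _
    have hk3 : 1 ≤ t ^ 2 := one_le_pow₀ ht1
    have h297 : 297 ≤ t ^ 6 := by
      have : (297 : ℝ) ^ 2 ≤ (t ^ 6) ^ 2 := by rw [← pow_mul, ht12]; exact hx
      exact le_of_sq_le_sq this (by positivity)
    have hkx : 11 * (2 * (k : ℝ) + 1) ^ 3 ≤ x := by
      calc 11 * (2 * (k : ℝ) + 1) ^ 3 ≤ 11 * (3 * t ^ 2) ^ 3 := by gcongr; linarith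
        _ = 297 * t ^ 6 := by ring
        _ ≤ t ^ 6 * t ^ 6 := by gcongr
        _ = x := by rw [← ht12]; ring
    have hc := hcount k x hkx
    have hc1 : ((S k).card : ℝ) ≤ countIn {a | ∃ k, a ∈ S k} (-x) x := by exact_mod_cast hc
    have hc2 : (k : ℝ) ≤ ((S k).card : ℝ) ^ 2 := by exact_mod_cast hcard k
    have hk4 : (1 : ℝ) ≤ k := by
      have : 1 ≤ k := Nat.le_floor (by simpa using hk3)
      exact_mod_cast this
    refine le_trans ?_ hc1
    refine abs_le_of_sq_le_sq' ?_ (by positivity) |>.2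
    nlinarith
end

section
/- Let A be a unique representation basis of the integers and let n be a positive integer. For each integer ℓ with 1 ≤ ℓ ≤ n, let N_ℓ be the number of elements of A in the interval ((ℓ−1)n, ℓn]. Then ∑_{ℓ=1}^{n} N_ℓ² < 5n. -/
open Filter Set

theorem urb_sidon (A : Set ℤ) (hA : IsUniqueRepBasis A) {a b c d : ℤ} (ha : a ∈ A) (hb : b ∈ A)
    (hc : c ∈ A) (hd : d ∈ A) (h : a + b = c + d) : (a = c ∧ b = d) ∨ (a = d ∧ b = c) := by
  obtain ⟨p, hp⟩ := Set.ncard_eq_one.mp (hA (a + b))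
  have key : ∀ x y : ℤ, x ∈ A → y ∈ A → x ≤ y → x + y = a + b → (x, y) = p := by
    intro x y hx hy hxy hs
    have : (x, y) ∈ ({p} : Set (ℤ × ℤ)) := by
      rw [← hp]
      exact ⟨hx, hy, hxy, hs⟩
    simpa using this
  have k1 := key a b ha hb
  have k2 := key b a hb ha
  have k3 := key c d hc hd
  have k4 := key d c hd hc
  obtain ⟨p1, p2⟩ := p
  simp only [Prod.mk.injEq] at k1 k2 k3 k4
  rcases le_total a b with h1 | h1 <;> rcases le_total c d with h2 | h2 <;> grind

theorem urb_interval_unique {n l m a : ℤ} (hn : 0 < n) (h1 : (l - 1) * n < a) (h2 : a ≤ m * n) :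
    l ≤ m := by
  by_contra h
  have : m ≤ l - 1 := by omega
  nlinarith

/-- For a unique representation basis, `∑_{ℓ=1}^{n} N_ℓ² < 5n`. -/
theorem urb_sum_sq_lt (A : Set ℤ) (hA : IsUniqueRepBasis A) (n : ℕ) (hn : 0 < n)
    (N : ℕ → ℕ)
    (hN : ∀ ℓ : ℕ, N ℓ = {a : ℤ | a ∈ A ∧ ((ℓ : ℤ) - 1) * n < a ∧ a ≤ (ℓ : ℤ) * n}.ncard) :
    ∑ ℓ ∈ Finset.Icc 1 n, (N ℓ) ^ 2 < 5 * n := by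
  classical
  let F : ℕ → Finset ℤ := fun l => (Finset.Ioc (((l : ℤ) - 1) * n) ((l : ℤ) * n)).filter (· ∈ A)
  have memF : ∀ l a, a ∈ F l ↔ a ∈ A ∧ ((l : ℤ) - 1) * n < a ∧ a ≤ (l : ℤ) * n := by
    intro l a
    simp only [F, Finset.mem_filter, Finset.mem_Ioc]
    tauto
  have hF : ∀ l, N l = (F l).card := by
    intro l
    rw [hN, ← Set.ncard_coe_finset]
    congr 1
    ext a
    simp only [Set.mem_ofPred_eq, Finset.mem_coe, memF]
  have hn' : (0 : ℤ) < n := by exact_mod_cast hn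
  have hcard : ((Finset.Icc 1 n).sigma (fun l => (F l).offDiag)).card
      ≤ ((Finset.Ioo (-(n : ℤ)) n).erase 0).card := by
    apply Finset.card_le_card_of_injOn (fun x => x.2.1 - x.2.2)
    · rintro ⟨l, a, b⟩ h
      simp only [Finset.coe_sigma, Set.mem_sigma_iff, Finset.mem_coe, Finset.mem_offDiag, memF] at h
      obtain ⟨-, ⟨-, h1, h2⟩, ⟨-, h3, h4⟩, h5⟩ := h
      rw [sub_mul, one_mul] at h1 h3
      simp only [Finset.coe_erase, Finset.coe_Ioo, Set.mem_sdiff, Set.mem_Ioo,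
        Set.mem_singleton_iff]
      omega
    · rintro ⟨l, a, b⟩ h ⟨m, c, d⟩ h' he
      simp only [Finset.coe_sigma, Set.mem_sigma_iff, Finset.mem_coe, Finset.mem_offDiag, memF] at h h'
      obtain ⟨-, ⟨ha, h1, h2⟩, ⟨hb, h3, h4⟩, h5⟩ := h
      obtain ⟨-, ⟨hc, g1, g2⟩, ⟨hd, g3, g4⟩, g5⟩ := h'
      simp only at he
      have hs := urb_sidon A hA ha hd hc hb (by linarith)
      obtain ⟨rfl, rfl⟩ : a = c ∧ b = d := by omega
      have e1 := urb_interval_unique hn' h1 g2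
      have e2 := urb_interval_unique hn' g1 h2
      obtain rfl : l = m := by omega
      rfl
  rw [Finset.card_sigma, Finset.card_erase_of_mem (by simp; omega), Int.card_Ioo] at hcard
  have hle : ∑ l ∈ Finset.Icc 1 n, 2 * (N l) ^ 2
      ≤ ∑ l ∈ Finset.Icc 1 n, (3 * (F l).offDiag.card + 2) := by
    apply Finset.sum_le_sum
    intro l _
    rw [Finset.offDiag_card, ← hF]
    have h1 : N l ≤ N l * N l := Nat.le_mul_self _
    zify [h1]
    rcases Nat.lt_or_ge (N l) 2 with h | h
    · interval_cases N l <;> norm_num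
    · have : (2 : ℤ) ≤ N l := by exact_mod_cast h
      nlinarith
  rw [← Finset.mul_sum, Finset.sum_add_distrib, ← Finset.mul_sum] at hle
  simp only [Finset.sum_const, Nat.card_Icc, smul_eq_mul] at hle
  omega
end
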